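/- arXiv:1807.03536 — 2 statements merged into one kernel-verified Lean document; each statement's English description precedes it below -/
import Mathlib

section
/- Let Φ̊ be an irreducible root system in V, (Λ_α) an extension datum of type (Φ̊, Y), and Φ^re the associated set of real roots. If Ψ is a closed subroot system of Φ^re, then Gr(Ψ) is either a closed subroot system or a semi-closed subroot system of Φ̊. If moreover Ψ is a maximal closed subroot system of Φ^re and Gr(Ψ) is semi-closed, then Gr(Ψ) is a maximal semi-closed subroot system of Φ̊. -/
/-!
Let `Δ` be a set of roots stable under its own reflections, and let `α, β ∈ Δ` have a root
`γ = α + β` as sum. If `(α, β) < 0`, then one of `s_α(β)`, `s_β(α)` equals `γ`, so `γ ∈ Δ`. If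
`(α, β) ≥ 0`, then `γ` is strictly longer than `α` and `β`, which forces
`(α, γ∨) = (β, γ∨) = 1`; hence `α` and `β` have equal length and, `1/2` not being an integer,
neither is divisible. If `γ` is not divisible, it is long because `|γ|² ≥ 2|α|²`, while by
irreducibility a non-divisible root longer than a root `ρ` has squared length `2|ρ|²` or `3|ρ|²`.
So every subroot system of `Φ` is closed or semi-closed, and gradients are subroot systems.

For maximality, the real roots over a proper closed `Δ ⊆ Φ` form a closed subroot system of the
real roots whose gradient is `Δ`. Thus `Gr Ψ ⊂ Δ` would give a proper enlargement of `Ψ`.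
-/

open scoped RealInnerProductSpace Pointwise

noncomputable section

namespace BdS

variable {V Y : Type*} [NormedAddCommGroup V] [InnerProductSpace ℝ V]
variable [AddCommGroup Y] [Module ℝ Y]

/-- `pairing β α = (β, α∨) = 2(β,α)/(α,α)`. -/
def pairing (β α : V) : ℝ := 2 * ⟪β, α⟫ / ⟪α, α⟫

/-- `reflRoot α v = s_α(v) = v − (v, α∨)α`. -/
def reflRoot (α v : V) : V := v - pairing v α • α

/-- A (finite) root system in `V`. -/
def IsRootSystem (Φ : Set V) : Prop :=
  Φ.Finite ∧ (0 : V) ∉ Φ ∧ Submodule.span ℝ Φ = ⊤ ∧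
    (∀ α ∈ Φ, ∀ β ∈ Φ, reflRoot α β ∈ Φ) ∧
    ∀ α ∈ Φ, ∀ β ∈ Φ, ∃ m : ℤ, pairing β α = (m : ℝ)

def IsReduced (Φ : Set V) : Prop :=
  ∀ α ∈ Φ, ∀ c : ℝ, c • α ∈ Φ → c • α = α ∨ c • α = -α

def IsIrreducible (Φ : Set V) : Prop :=
  ∀ Φ₁ Φ₂ : Set V, Φ = Φ₁ ∪ Φ₂ → (∀ x ∈ Φ₁, ∀ y ∈ Φ₂, ⟪x, y⟫ = 0) →
    Φ₁ = ∅ ∨ Φ₂ = ∅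

/-- divisible roots -/
def divSet (Φ : Set V) : Set V := {α ∈ Φ | (2:ℝ)⁻¹ • α ∈ Φ}
/-- non-divisible roots -/
def ndSet (Φ : Set V) : Set V := Φ \ divSet Φ
/-- short roots: non-divisible roots of non-maximal squared length -/
def shortSet (Φ : Set V) : Set V := {α ∈ ndSet Φ | ∃ β ∈ ndSet Φ, ⟪α, α⟫ < ⟪β, β⟫}
/-- long roots -/
def longSet (Φ : Set V) : Set V := ndSet Φ \ shortSet Φ

/-- An extension datum of type `(Φ, Y)`. -/
def IsExtensionDatum (Φ : Set V) (Λ : V → Set Y) : Prop :=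
  (∀ α ∈ Φ, ∀ β ∈ Φ, ∀ z ∈ Λ α, ∀ y ∈ Λ β, y - pairing β α • z ∈ Λ (reflRoot α β)) ∧
  (0 : Y) ∈ Λ 0 ∧
  (∀ α ∈ ndSet Φ, (0 : Y) ∈ Λ α) ∧
  (∀ α ∈ divSet Φ, (Λ α).Nonempty) ∧
  Submodule.span ℝ (⋃ α ∈ insert (0 : V) Φ, Λ α) = ⊤

/-- subroot system of a finite root system -/
def IsSubRS (Φ Δ : Set V) : Prop :=
  Δ.Nonempty ∧ Δ ⊆ Φ ∧ ∀ α ∈ Δ, ∀ β ∈ Δ, reflRoot α β ∈ Δ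

def IsClosedSubRS (Φ Δ : Set V) : Prop :=
  IsSubRS Φ Δ ∧ ∀ α ∈ Δ, ∀ β ∈ Δ, α + β ∈ Φ → α + β ∈ Δ

def IsMaxClosedSubRS (Φ Δ : Set V) : Prop :=
  IsClosedSubRS Φ Δ ∧ Δ ≠ Φ ∧
    ∀ Δ' : Set V, IsClosedSubRS Φ Δ' → Δ' ≠ Φ → Δ ⊆ Δ' → Δ' = Δ

/-- semi-closed subroot system, relative to given short/long/divisible parts -/
def IsSemiClosedSubRS (Φ Φs Φl Φd Δ : Set V) : Prop :=
  IsSubRS Φ Δ ∧ ¬ (∀ α ∈ Δ, ∀ β ∈ Δ, α + β ∈ Φ → α + β ∈ Δ) ∧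
    ∀ α ∈ Δ, ∀ β ∈ Δ, α + β ∈ Φ → α + β ∉ Δ →
      (α ∈ Φs ∧ β ∈ Φs ∧ α + β ∈ Φl ∪ Φd) ∨ (α ∈ Φl ∧ β ∈ Φl ∧ α + β ∈ Φd)

def IsMaxSemiClosedSubRS (Φ Φs Φl Φd Δ : Set V) : Prop :=
  IsSemiClosedSubRS Φ Φs Φl Φd Δ ∧
    ∀ Δ' : Set V, IsClosedSubRS Φ Δ' → Δ' ≠ Φ → ¬ Δ ⊂ Δ'

/-- the set of real roots attached to an extension datum -/
def PhiRe (Φ : Set V) (Λ : V → Set Y) : Set (V × Y) := {x | x.1 ∈ Φ ∧ x.2 ∈ Λ x.1}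

/-- affine reflection `s_{α ⊕ y}(β ⊕ z) = s_α(β) ⊕ (z − (β,α∨)y)` -/
def reflAff (a x : V × Y) : V × Y := (reflRoot a.1 x.1, x.2 - pairing x.1 a.1 • a.2)

/-- subroot system of a set of real roots `R` -/
def IsSubSys (R Ψ : Set (V × Y)) : Prop :=
  Ψ.Nonempty ∧ Ψ ⊆ R ∧ Ψ ≠ R ∧ ∀ a ∈ Ψ, ∀ x ∈ Ψ, reflAff a x ∈ Ψ

def IsClosedSubSys (R Ψ : Set (V × Y)) : Prop :=
  IsSubSys R Ψ ∧ ∀ x ∈ Ψ, ∀ y ∈ Ψ, x + y ∈ R → x + y ∈ Ψ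

def IsMaxClosedSubSys (R Ψ : Set (V × Y)) : Prop :=
  IsClosedSubSys R Ψ ∧ ∀ Ψ' : Set (V × Y), IsClosedSubSys R Ψ' → Ψ ⊆ Ψ' → Ψ' = Ψ

/-- gradient of a subroot system -/
def Gr (Ψ : Set (V × Y)) : Set V := {α | ∃ y : Y, (α, y) ∈ Ψ}

def Zset (Ψ : Set (V × Y)) (α : V) : Set Y := {y | (α, y) ∈ Ψ}

abbrev E (n : ℕ) := EuclideanSpace ℝ (Fin n)

def eps {n : ℕ} (i : Fin n) : E n := EuclideanSpace.single i 1

def shortBC (n : ℕ) : Set (E n) := {v | ∃ i : Fin n, v = eps i ∨ v = -eps i}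

def longBC (n : ℕ) : Set (E n) :=
  {v | ∃ i j : Fin n, i ≠ j ∧ ∃ c d : ℝ, (c = 1 ∨ c = -1) ∧ (d = 1 ∨ d = -1) ∧
    v = c • eps i + d • eps j}

def divBC (n : ℕ) : Set (E n) :=
  {v | ∃ i : Fin n, v = (2:ℝ) • eps i ∨ v = -((2:ℝ) • eps i)}

def BCn (n : ℕ) : Set (E n) := shortBC n ∪ longBC n ∪ divBC n
def Bn (n : ℕ) : Set (E n) := shortBC n ∪ longBC n
def Cn (n : ℕ) : Set (E n) := longBC n ∪ divBC n

/-- A crystallographic root system in the usual sense, except that it may be infinite and need not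
span `V`; locally finite root systems are included. -/
structure IsCrystallographicRootSet (Φ : Set V) : Prop where
  zero_notMem : (0 : V) ∉ Φ
  reflRoot_mem : ∀ α ∈ Φ, ∀ β ∈ Φ, reflRoot α β ∈ Φ
  exists_int : ∀ α ∈ Φ, ∀ β ∈ Φ, ∃ m : ℤ, pairing β α = m

lemma IsRootSystem.isCrystallographicRootSet {Φ : Set V} (hΦ : IsRootSystem Φ) :
    IsCrystallographicRootSet Φ :=
  ⟨hΦ.2.1, hΦ.2.2.2.1, hΦ.2.2.2.2⟩

section Pairing

lemma pairing_mul_inner_self (β α : V) : pairing β α * ⟪α, α⟫ = 2 * ⟪β, α⟫ :=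
  div_mul_cancel_of_imp fun h => by rw [inner_self_eq_zero.1 h, inner_zero_right, mul_zero]

lemma pairing_smul_left (c : ℝ) (β α : V) : pairing (c • β) α = c * pairing β α := by
  rw [pairing, pairing, real_inner_smul_left]
  ring

lemma pairing_neg_left (β α : V) : pairing (-β) α = -pairing β α := by
  rw [pairing, pairing, inner_neg_left]
  ring

lemma inner_reflRoot_left_self (α β : V) : ⟪reflRoot α β, α⟫ = -⟪β, α⟫ := by
  rw [reflRoot, inner_sub_left, real_inner_smul_left, pairing_mul_inner_self]
  ring

lemma inner_self_reflRoot (α β : V) : ⟪reflRoot α β, reflRoot α β⟫ = ⟪β, β⟫ := by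
  rw [reflRoot, real_inner_sub_sub_self, real_inner_smul_left, real_inner_smul_right,
    real_inner_smul_right, pairing_mul_inner_self]
  ring

lemma reflRoot_smul (α β : V) (c : ℝ) : reflRoot α (c • β) = c • reflRoot α β := by
  rw [reflRoot, reflRoot, pairing_smul_left]
  module

lemma reflRoot_reflRoot (α β : V) : reflRoot α (reflRoot α β) = β := by
  have pairing_reflRoot : pairing (reflRoot α β) α = -pairing β α := by
    rw [pairing, inner_reflRoot_left_self, pairing]
    ring
  rw [reflRoot, pairing_reflRoot, reflRoot]
  module

lemma pairing_eq_one_of_inner_pos {x y : V} (hint : ∃ m : ℤ, pairing x y = m) (hne : x ≠ y)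
    (hle : ⟪x, x⟫ ≤ ⟪y, y⟫) (hpos : 0 < ⟪x, y⟫) : pairing x y = 1 := by
  obtain ⟨m, hm⟩ := hint
  have hmul : m * ⟪y, y⟫ = 2 * ⟪x, y⟫ := hm ▸ pairing_mul_inner_self x y
  have hy : 0 ≤ ⟪y, y⟫ := real_inner_self_nonneg
  have hsub : 0 < ⟪x - y, x - y⟫ := real_inner_self_pos.2 (sub_ne_zero.2 hne)
  rw [real_inner_sub_sub_self] at hsub
  have hm_pos : (0 : ℝ) < m := pos_of_mul_pos_left (by linarith) hy
  have hm_lt : (m : ℝ) < 2 := lt_of_mul_lt_mul_right (by linarith) hy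
  have hm_one : m = 1 := le_antisymm
    (Int.lt_add_one_iff.1 (by exact_mod_cast hm_lt)) (by exact_mod_cast hm_pos)
  rw [hm, hm_one, Int.cast_one]

lemma pairing_eq_neg_one_of_inner_neg {x y : V} (hint : ∃ m : ℤ, pairing x y = m)
    (hne : x + y ≠ 0) (hle : ⟪x, x⟫ ≤ ⟪y, y⟫) (hneg : ⟪x, y⟫ < 0) : pairing x y = -1 := by
  obtain ⟨m, hm⟩ := hint
  rw [eq_neg_iff_add_eq_zero, ← neg_eq_iff_add_eq_zero, ← pairing_neg_left]
  refine pairing_eq_one_of_inner_pos ⟨-m, ?_⟩ (fun h => hne ?_) ?_ ?_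
  · rw [pairing_neg_left, hm, Int.cast_neg]
  · rw [← h, add_neg_cancel]
  · rwa [inner_neg_neg]
  · rwa [inner_neg_left, neg_pos]

end Pairing

section RootLengths

variable {Φ : Set V} {α β γ δ : V}

lemma IsIrreducible.exists_inner_pos (hirr : IsIrreducible Φ) (h0 : (0 : V) ∉ Φ) {S : Set V}
    (hS : S.Nonempty) (hSΦ : S ⊆ Φ) (hstable : ∀ ρ ∈ Φ, ∀ σ ∈ S, reflRoot ρ σ ∈ S)
    (hα : α ∈ Φ) : ∃ σ ∈ S, 0 < ⟪σ, α⟫ := by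
  suffices h : ∃ σ ∈ S, ⟪σ, α⟫ ≠ 0 by
    obtain ⟨σ, hσ, hne⟩ := h
    rcases hne.lt_or_gt with hneg | hpos
    · exact ⟨reflRoot α σ, hstable α hα σ hσ, by rwa [inner_reflRoot_left_self, neg_pos]⟩
    · exact ⟨σ, hσ, hpos⟩
  by_contra! hαS
  let Φorth : Set V := {ρ ∈ Φ | ∀ σ ∈ S, ⟪σ, ρ⟫ = 0}
  have orthogonal : ∀ ρ ∈ Φ \ Φorth, ∀ τ ∈ Φorth, ⟪ρ, τ⟫ = 0 := by
    rintro ρ ⟨hρ, hρS⟩ τ ⟨-, hτ⟩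
    obtain ⟨σ, hσ, hσρ⟩ : ∃ σ ∈ S, ⟪σ, ρ⟫ ≠ 0 := by
      by_contra! h
      exact hρS ⟨hρ, h⟩
    have hpairing : pairing σ ρ ≠ 0 := fun h => hσρ <| by
      simpa [h] using (pairing_mul_inner_self σ ρ).symm
    have hrefl := hτ _ (hstable ρ hρ σ hσ)
    rw [reflRoot, inner_sub_left, hτ σ hσ, real_inner_smul_left, zero_sub, neg_eq_zero] at hrefl
    exact (mul_eq_zero.1 hrefl).resolve_left hpairing
  rcases hirr _ Φorth (Set.sdiff_union_of_subset fun _ h => h.1).symm orthogonal with h | h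
  · obtain ⟨σ, hσ⟩ := hS
    have hσorth : σ ∈ Φorth := Set.sdiff_eq_empty.1 h (hSΦ hσ)
    exact h0 (inner_self_eq_zero.1 (hσorth.2 σ hσ) ▸ hSΦ hσ)
  · exact h.le ⟨hα, hαS⟩

namespace IsCrystallographicRootSet

variable (hΦ : IsCrystallographicRootSet Φ)
include hΦ

lemma inner_self_pos (hα : α ∈ Φ) : 0 < ⟪α, α⟫ :=
  real_inner_self_pos.2 fun h => hΦ.zero_notMem (h ▸ hα)

lemma reflRoot_mem_ndSet (hα : α ∈ Φ) (hδ : δ ∈ ndSet Φ) : reflRoot α δ ∈ ndSet Φ := by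
  refine ⟨hΦ.reflRoot_mem α hα δ hδ.1, fun hdiv => hδ.2 ⟨hδ.1, ?_⟩⟩
  simpa only [reflRoot_smul, reflRoot_reflRoot] using hΦ.reflRoot_mem α hα _ hdiv.2

lemma notMem_divSet_of_pairing_eq_one (hγ : γ ∈ Φ) (h : pairing α γ = 1) : α ∉ divSet Φ := by
  rintro ⟨-, hhalf⟩
  obtain ⟨m, hm⟩ := hΦ.exists_int γ hγ _ hhalf
  rw [pairing_smul_left, h] at hm
  have : 2 * m = 1 := by exact_mod_cast (by linarith : (2 : ℝ) * m = 1)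
  omega

lemma inner_self_eq_two_or_three_mul_of_inner_pos (hα : α ∈ Φ) (hδ : δ ∈ ndSet Φ)
    (hlt : ⟪α, α⟫ < ⟪δ, δ⟫) (hpos : 0 < ⟪δ, α⟫) : ⟪δ, δ⟫ = 2 * ⟪α, α⟫ ∨ ⟪δ, δ⟫ = 3 * ⟪α, α⟫ := by
  have hα_pos := hΦ.inner_self_pos hα
  have hαδ : pairing α δ = 1 := by
    refine pairing_eq_one_of_inner_pos (hΦ.exists_int δ hδ.1 α hα) ?_ hlt.le ?_
    · rintro rfl
      exact hlt.false
    · rwa [real_inner_comm]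
  have hδδ : ⟪δ, δ⟫ = 2 * ⟪δ, α⟫ := by
    rw [real_inner_comm α δ, ← pairing_mul_inner_self, hαδ, one_mul]
  obtain ⟨m, hm⟩ := hΦ.exists_int α hα δ hδ.1
  have hmα : ⟪δ, δ⟫ = m * ⟪α, α⟫ := by rw [hδδ, ← pairing_mul_inner_self, hm]
  have hδ_ne : δ ≠ (2 : ℝ) • α := by
    rintro rfl
    exact hδ.2 ⟨hδ.1, by rwa [inv_smul_smul₀ two_ne_zero]⟩
  have hsub : ⟪δ - (2 : ℝ) • α, δ - (2 : ℝ) • α⟫ = (4 - m) * ⟪α, α⟫ := by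
    rw [real_inner_sub_sub_self, real_inner_smul_left, real_inner_smul_right,
      real_inner_smul_right]
    linarith
  have hm_gt : (1 : ℝ) < m := lt_of_mul_lt_mul_right (by linarith) hα_pos.le
  have hm_lt : (0 : ℝ) < 4 - m :=
    pos_of_mul_pos_left (hsub ▸ real_inner_self_pos.2 (sub_ne_zero.2 hδ_ne)) hα_pos.le
  have hm_cases : m = 2 ∨ m = 3 := by
    have : 1 < m := by exact_mod_cast hm_gt
    have : m < 4 := by exact_mod_cast sub_pos.1 hm_lt
    omega
  exact hm_cases.imp (fun h => by rw [hmα, h, Int.cast_ofNat])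
    fun h => by rw [hmα, h, Int.cast_ofNat]

lemma inner_self_eq_two_or_three_mul_of_lt (hirr : IsIrreducible Φ) (hα : α ∈ Φ)
    (hδ : δ ∈ ndSet Φ) (hlt : ⟪α, α⟫ < ⟪δ, δ⟫) : ⟪δ, δ⟫ = 2 * ⟪α, α⟫ ∨ ⟪δ, δ⟫ = 3 * ⟪α, α⟫ := by
  obtain ⟨δ', ⟨hδ', hlen⟩, hpos⟩ := hirr.exists_inner_pos hΦ.zero_notMem
    (S := {σ ∈ ndSet Φ | ⟪σ, σ⟫ = ⟪δ, δ⟫}) ⟨δ, hδ, rfl⟩ (fun σ hσ => hσ.1.1)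
    (fun ρ hρ σ hσ => ⟨hΦ.reflRoot_mem_ndSet hρ hσ.1, by rw [inner_self_reflRoot, hσ.2]⟩) hα
  rw [← hlen] at hlt ⊢
  exact hΦ.inner_self_eq_two_or_three_mul_of_inner_pos hα hδ' hlt hpos

lemma mem_longSet_of_two_mul_inner_self_le (hirr : IsIrreducible Φ) (hα : α ∈ Φ)
    (hγ : γ ∈ ndSet Φ) (hle : 2 * ⟪α, α⟫ ≤ ⟪γ, γ⟫) : γ ∈ longSet Φ := by
  refine ⟨hγ, fun ⟨_, δ, hδ, hγδ⟩ => ?_⟩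
  have hα_pos := hΦ.inner_self_pos hα
  have hδ_le : ⟪δ, δ⟫ ≤ 3 * ⟪α, α⟫ := by
    rcases hΦ.inner_self_eq_two_or_three_mul_of_lt hirr hα hδ (by linarith) with h | h <;> linarith
  have hδ_ge : 2 * ⟪γ, γ⟫ ≤ ⟪δ, δ⟫ := by
    rcases hΦ.inner_self_eq_two_or_three_mul_of_lt hirr hγ.1 hδ hγδ with h | h <;> linarith
  linarith

end IsCrystallographicRootSet

lemma mem_shortSet_of_inner_self_eq (hα : α ∈ shortSet Φ) (hβ : β ∈ ndSet Φ)
    (hlen : ⟪α, α⟫ = ⟪β, β⟫) : β ∈ shortSet Φ := by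
  obtain ⟨-, δ, hδ, hlt⟩ := hα
  exact ⟨hβ, δ, hδ, hlen ▸ hlt⟩

end RootLengths

section SumsOfRoots

variable {Φ Δ : Set V} {α β : V}

namespace IsCrystallographicRootSet

variable (hΦ : IsCrystallographicRootSet Φ)
include hΦ

lemma pairing_left_add_eq_one (hα : α ∈ Φ) (hβ : β ∈ Φ) (hαβ : α + β ∈ Φ)
    (hnonneg : 0 ≤ ⟪α, β⟫) : pairing α (α + β) = 1 := by
  have hα_pos := hΦ.inner_self_pos hα
  have hβ_pos := hΦ.inner_self_pos hβ
  refine pairing_eq_one_of_inner_pos (hΦ.exists_int _ hαβ α hα) (fun h => ?_) ?_ ?_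
  · exact hΦ.zero_notMem (left_eq_add.1 h ▸ hβ)
  · rw [real_inner_add_add_self]
    linarith
  · rw [inner_add_right]
    linarith

lemma pairing_right_add_eq_one (hα : α ∈ Φ) (hβ : β ∈ Φ) (hαβ : α + β ∈ Φ)
    (hnonneg : 0 ≤ ⟪α, β⟫) : pairing β (α + β) = 1 := by
  rw [add_comm] at hαβ ⊢
  exact hΦ.pairing_left_add_eq_one hβ hα hαβ (by rwa [real_inner_comm])

lemma inner_self_eq_of_add_mem (hα : α ∈ Φ) (hβ : β ∈ Φ) (hαβ : α + β ∈ Φ)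
    (hnonneg : 0 ≤ ⟪α, β⟫) : ⟪α, α⟫ = ⟪β, β⟫ := by
  have hα_len := pairing_mul_inner_self α (α + β)
  have hβ_len := pairing_mul_inner_self β (α + β)
  rw [hΦ.pairing_left_add_eq_one hα hβ hαβ hnonneg, inner_add_right α] at hα_len
  rw [hΦ.pairing_right_add_eq_one hα hβ hαβ hnonneg, inner_add_right β,
    real_inner_comm α β] at hβ_len
  linarith

lemma mem_shortSet_or_mem_longSet_of_add_mem (hirr : IsIrreducible Φ) (hα : α ∈ Φ) (hβ : β ∈ Φ)
    (hαβ : α + β ∈ Φ) (hnonneg : 0 ≤ ⟪α, β⟫) :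
    (α ∈ shortSet Φ ∧ β ∈ shortSet Φ ∧ α + β ∈ longSet Φ ∪ divSet Φ) ∨
      (α ∈ longSet Φ ∧ β ∈ longSet Φ ∧ α + β ∈ divSet Φ) := by
  have hlen := hΦ.inner_self_eq_of_add_mem hα hβ hαβ hnonneg
  have hα_nd : α ∈ ndSet Φ :=
    ⟨hα, hΦ.notMem_divSet_of_pairing_eq_one hαβ
      (hΦ.pairing_left_add_eq_one hα hβ hαβ hnonneg)⟩
  have hβ_nd : β ∈ ndSet Φ :=
    ⟨hβ, hΦ.notMem_divSet_of_pairing_eq_one hαβ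
      (hΦ.pairing_right_add_eq_one hα hβ hαβ hnonneg)⟩
  by_cases hdiv : α + β ∈ divSet Φ
  · by_cases hα_short : α ∈ shortSet Φ
    · exact .inl ⟨hα_short, mem_shortSet_of_inner_self_eq hα_short hβ_nd hlen, .inr hdiv⟩
    · refine .inr ⟨⟨hα_nd, hα_short⟩, ⟨hβ_nd, fun hβ_short => hα_short ?_⟩, hdiv⟩
      exact mem_shortSet_of_inner_self_eq hβ_short hα_nd hlen.symm
  · have hαβ_nd : α + β ∈ ndSet Φ := ⟨hαβ, hdiv⟩
    have hle : 2 * ⟪α, α⟫ ≤ ⟪α + β, α + β⟫ := by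
      rw [real_inner_add_add_self]
      linarith
    have hα_short : α ∈ shortSet Φ :=
      ⟨hα_nd, α + β, hαβ_nd, by linarith [hΦ.inner_self_pos hα]⟩
    exact .inl ⟨hα_short, mem_shortSet_of_inner_self_eq hα_short hβ_nd hlen,
      .inl (hΦ.mem_longSet_of_two_mul_inner_self_le hirr hα hαβ_nd hle)⟩

end IsCrystallographicRootSet

lemma IsSubRS.add_mem_of_inner_neg (hΔ : IsSubRS Φ Δ) (hΦ : IsCrystallographicRootSet Φ)
    (hα : α ∈ Δ) (hβ : β ∈ Δ) (hαβ : α + β ≠ 0) (hneg : ⟪α, β⟫ < 0) : α + β ∈ Δ := by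
  wlog hle : ⟪α, α⟫ ≤ ⟪β, β⟫ generalizing α β
  · rw [add_comm]
    exact this hβ hα (by rwa [add_comm]) (by rwa [real_inner_comm]) (le_of_not_ge hle)
  have hpairing : pairing α β = -1 :=
    pairing_eq_neg_one_of_inner_neg (hΦ.exists_int β (hΔ.2.1 hβ) α (hΔ.2.1 hα)) hαβ hle hneg
  have hrefl := hΔ.2.2 β hβ α hα
  rwa [reflRoot, hpairing, neg_one_smul, sub_neg_eq_add] at hrefl

theorem IsSubRS.isClosedSubRS_or_isSemiClosedSubRS (hΔ : IsSubRS Φ Δ)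
    (hΦ : IsCrystallographicRootSet Φ) (hirr : IsIrreducible Φ) :
    IsClosedSubRS Φ Δ ∨
      IsSemiClosedSubRS Φ (shortSet Φ) (longSet Φ) (divSet Φ) Δ := by
  by_cases hclosed : ∀ α ∈ Δ, ∀ β ∈ Δ, α + β ∈ Φ → α + β ∈ Δ
  · exact .inl ⟨hΔ, hclosed⟩
  · refine .inr ⟨hΔ, hclosed, fun α hα β hβ hαβ hnotMem => ?_⟩
    refine hΦ.mem_shortSet_or_mem_longSet_of_add_mem hirr (hΔ.2.1 hα) (hΔ.2.1 hβ) hαβ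
      (not_lt.1 fun hneg => hnotMem ?_)
    exact hΔ.add_mem_of_inner_neg hΦ hα hβ (fun h => hΦ.zero_notMem (h ▸ hαβ)) hneg

end SumsOfRoots

section Gradient

variable {Φ Δ : Set V} {Λ : V → Set Y} {Ψ : Set (V × Y)}

lemma IsExtensionDatum.nonempty (hΛ : IsExtensionDatum Φ Λ) {α : V} (hα : α ∈ Φ) :
    (Λ α).Nonempty := by
  by_cases hdiv : α ∈ divSet Φ
  · exact hΛ.2.2.2.1 α hdiv
  · exact ⟨0, hΛ.2.2.1 α ⟨hα, hdiv⟩⟩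

omit [NormedAddCommGroup V] [InnerProductSpace ℝ V] [AddCommGroup Y] [Module ℝ Y] in
lemma Gr_PhiRe (hΛ : ∀ α ∈ Φ, (Λ α).Nonempty) : Gr (PhiRe Φ Λ) = Φ :=
  Set.ext fun α => ⟨fun ⟨_, h⟩ => h.1, fun hα => (hΛ α hα).imp fun _ hy => ⟨hα, hy⟩⟩

lemma IsSubSys.isSubRS_Gr (hΨ : IsSubSys (PhiRe Φ Λ) Ψ) : IsSubRS Φ (Gr Ψ) := by
  obtain ⟨⟨x, hx⟩, hsub, -, hrefl⟩ := hΨ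
  exact ⟨⟨x.1, x.2, hx⟩, fun α ⟨_, hα⟩ => (hsub hα).1,
    fun α ⟨_, hα⟩ β ⟨_, hβ⟩ => ⟨_, hrefl _ hα _ hβ⟩⟩

lemma IsClosedSubRS.isClosedSubSys_PhiRe (hΔ : IsClosedSubRS Φ Δ) (hne : Δ ≠ Φ)
    (hΛ : IsExtensionDatum Φ Λ) : IsClosedSubSys (PhiRe Φ Λ) (PhiRe Δ Λ) := by
  obtain ⟨⟨⟨α, hα⟩, hΔΦ, hrefl⟩, hadd⟩ := hΔ
  refine ⟨⟨?nonempty, ?subset, ?proper, ?reflection⟩, ?closed⟩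
  case nonempty =>
    obtain ⟨y, hy⟩ := hΛ.nonempty (hΔΦ hα)
    exact ⟨(α, y), hα, hy⟩
  case subset => exact fun x hx => ⟨hΔΦ hx.1, hx.2⟩
  case proper =>
    intro h
    apply hne
    rw [← Gr_PhiRe fun β hβ => hΛ.nonempty (hΔΦ hβ), h, Gr_PhiRe fun β hβ => hΛ.nonempty hβ]
  case reflection =>
    exact fun a ha x hx =>
      ⟨hrefl _ ha.1 _ hx.1, hΛ.1 _ (hΔΦ ha.1) _ (hΔΦ hx.1) _ ha.2 _ hx.2⟩
  case closed => exact fun x hx y hy hxy => ⟨hadd _ hx.1 _ hy.1 hxy.1, hxy.2⟩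

theorem IsMaxClosedSubSys.not_Gr_ssubset (hΨ : IsMaxClosedSubSys (PhiRe Φ Λ) Ψ)
    (hΛ : IsExtensionDatum Φ Λ) (hΔ : IsClosedSubRS Φ Δ) (hne : Δ ≠ Φ) : ¬ Gr Ψ ⊂ Δ := by
  intro hlt
  have hsub : Ψ ⊆ PhiRe Δ Λ := fun x hx => ⟨hlt.1 ⟨x.2, hx⟩, (hΨ.1.1.2.1 hx).2⟩
  have hΨ_eq : PhiRe Δ Λ = Ψ := hΨ.2 _ (hΔ.isClosedSubSys_PhiRe hne hΛ) hsub
  have hGr : Gr Ψ = Δ := hΨ_eq ▸ Gr_PhiRe fun α hα => hΛ.nonempty (hΔ.1.2.1 hα)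
  exact hlt.ne hGr

end Gradient

theorem statement6_general {V Y : Type*} [NormedAddCommGroup V] [InnerProductSpace ℝ V]
    [AddCommGroup Y] [Module ℝ Y]
    (Φ : Set V) (hΦ : IsCrystallographicRootSet Φ) (hirr : IsIrreducible Φ)
    (Λ : V → Set Y) (hΛ : IsExtensionDatum Φ Λ)
    (Ψ : Set (V × Y)) (hΨ : IsClosedSubSys (PhiRe Φ Λ) Ψ) :
    (IsClosedSubRS Φ (Gr Ψ) ∨
      IsSemiClosedSubRS Φ (shortSet Φ) (longSet Φ) (divSet Φ) (Gr Ψ)) ∧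
    (IsMaxClosedSubSys (PhiRe Φ Λ) Ψ →
      IsSemiClosedSubRS Φ (shortSet Φ) (longSet Φ) (divSet Φ) (Gr Ψ) →
      IsMaxSemiClosedSubRS Φ (shortSet Φ) (longSet Φ) (divSet Φ) (Gr Ψ)) :=
  ⟨hΨ.1.isSubRS_Gr.isClosedSubRS_or_isSemiClosedSubRS hΦ hirr, fun hmax hsemi =>
    ⟨hsemi, fun _ hΔ hne => hmax.not_Gr_ssubset hΛ hΔ hne⟩⟩

/-- Section 3.3: the gradient of a closed subroot system is closed or semi-closed;
for a maximal closed subroot system with semi-closed gradient, the gradient is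
maximal semi-closed. -/
theorem statement6 {V Y : Type*} [NormedAddCommGroup V] [InnerProductSpace ℝ V]
    [AddCommGroup Y] [Module ℝ Y] [FiniteDimensional ℝ V] [FiniteDimensional ℝ Y]
    (Φ : Set V) (hΦ : IsRootSystem Φ) (hirr : IsIrreducible Φ)
    (Λ : V → Set Y) (hΛ : IsExtensionDatum Φ Λ)
    (Ψ : Set (V × Y)) (hΨ : IsClosedSubSys (PhiRe Φ Λ) Ψ) :
    (IsClosedSubRS Φ (Gr Ψ) ∨
      IsSemiClosedSubRS Φ (shortSet Φ) (longSet Φ) (divSet Φ) (Gr Ψ)) ∧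
    (IsMaxClosedSubSys (PhiRe Φ Λ) Ψ →
      IsSemiClosedSubRS Φ (shortSet Φ) (longSet Φ) (divSet Φ) (Gr Ψ) →
      IsMaxSemiClosedSubRS Φ (shortSet Φ) (longSet Φ) (divSet Φ) (Gr Ψ)) :=
  statement6_general Φ hΦ.isCrystallographicRootSet hirr Λ hΛ Ψ hΨ

end BdS
end
end

section
/- Let Φ̊ be a reduced irreducible root system in V in which exactly two root lengths occur, with Φ̊_s the roots of minimal squared length and Φ̊_ℓ = Φ̊ ∖ Φ̊_s, and let Φ̊' be a maximal semi-closed subroot system of Φ̊. Then the set Φ̊' ∪ {γ ∈ Φ̊_ℓ : γ = α + β for some α, β ∈ Φ̊' ∩ Φ̊_s} is the smallest closed subroot system of Φ̊ containing Φ̊'. In particular, Φ̊_s ⊆ Φ̊'. -/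
open scoped RealInnerProductSpace Pointwise

noncomputable section

namespace BdS

variable {V Y : Type*} [NormedAddCommGroup V] [InnerProductSpace ℝ V]
variable [AddCommGroup Y] [Module ℝ Y]

/-!
Every root in the lattice `ℤΔ` spanned by a subroot system `Δ` of `Φ` can be built up by adding
one element of `Δ` at a time, without ever leaving `Φ`. Suppose now that a sum of two elements of
`Δ` which is a root outside `Δ` always has maximal length in `Φ`. If `α + β` is such a sum and
adding `x ∈ Δ` to it gives a root again, then `⟪x, α + β⟫ < 0`, because the length cannot
increase. So `x` has a negative inner product with `α` or with `β`, say with `α`; then `x + α` is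
zero or lies in `Δ`, and `x + (α + β)` is an element of `Δ` or again a sum of two of them. Hence
adjoining the sums of two elements to `Δ` already produces all of `Φ ∩ ℤΔ`, which is closed.

For a maximal semi-closed `Δ` this closed system contains `Δ` properly, so it is all of `Φ`. Only
long roots were adjoined, so the short ones were in `Δ` from the start.
-/

lemma reflRoot_self {α : V} (hα : α ≠ 0) : reflRoot α α = -α := by
  have hα' : ⟪α, α⟫ ≠ 0 := inner_self_ne_zero.2 hα
  rw [reflRoot, pairing, mul_div_cancel_right₀ _ hα', two_smul]
  abel

lemma reflRoot_of_pairing_eq_neg_one {α v : V} (h : pairing v α = -1) :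
    reflRoot α v = v + α := by
  rw [reflRoot, h, neg_one_smul, sub_neg_eq_add]

lemma pairing_neg_of_inner_neg {α v : V} (h : ⟪v, α⟫ < 0) : pairing v α < 0 := by
  have hα : α ≠ 0 := by rintro rfl; simp at h
  exact div_neg_of_neg_of_pos (by linarith) (real_inner_self_pos.2 hα)

lemma inner_le_neg_of_pairing_le_neg_two {α v : V} (h : pairing v α ≤ -2) :
    ⟪v, α⟫ ≤ -⟪α, α⟫ := by
  rcases eq_or_ne α 0 with rfl | hα
  · simp
  · rw [pairing, div_le_iff₀ (real_inner_self_pos.2 hα)] at h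
    linarith

lemma add_eq_zero_of_pairing_le_neg_two {α β : V} (hαβ : pairing α β ≤ -2)
    (hβα : pairing β α ≤ -2) : α + β = 0 := by
  have hβ := inner_le_neg_of_pairing_le_neg_two hαβ
  have hα := inner_le_neg_of_pairing_le_neg_two hβα
  rw [real_inner_comm] at hα
  rw [← real_inner_self_nonpos, real_inner_add_add_self]
  linarith

lemma inner_neg_of_inner_add_self_le {x y : V} (hx : x ≠ 0) (h : ⟪x + y, x + y⟫ ≤ ⟪y, y⟫) :
    ⟪x, y⟫ < 0 := by
  rw [real_inner_add_add_self] at h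
  linarith [real_inner_self_pos.2 hx]

lemma exists_mem_inner_pos_of_inner_sum_pos {v : V} {s : Multiset V} (h : 0 < ⟪v, s.sum⟫) :
    ∃ x ∈ s, 0 < ⟪v, x⟫ := by
  contrapose! h
  rw [← innerₗ_apply_apply, map_multiset_sum]
  simpa using Multiset.sum_le_card_nsmul (s.map (innerₗ V v)) 0 (by simpa using h)

/-- The roots in `Φ` that are integral linear combinations of elements of `Δ`. -/
def latticeClosure {M : Type*} [AddCommGroup M] (Φ Δ : Set M) : Set M := Φ ∩ AddSubgroup.closure Δ

/-- The result of adjoining to `Δ` all sums of two of its elements that lie in `Φ`, once: sums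
involving the new elements are not adjoined. -/
def adjoinSums {M : Type*} [Add M] (Φ Δ : Set M) : Set M := Δ ∪ Φ ∩ (Δ + Δ)

lemma subset_adjoinSums {M : Type*} [Add M] {Φ Δ : Set M} : Δ ⊆ adjoinSums Φ Δ :=
  Set.subset_union_left

lemma add_mem_adjoinSums {M : Type*} [Add M] {Φ Δ : Set M} {α β : M} (hα : α ∈ Δ) (hβ : β ∈ Δ)
    (h : α + β ∈ Φ) : α + β ∈ adjoinSums Φ Δ :=
  Or.inr ⟨h, Set.add_mem_add hα hβ⟩

lemma adjoinSums_subset_latticeClosure {M : Type*} [AddCommGroup M] {Φ Δ : Set M}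
    (hΔ : Δ ⊆ Φ) : adjoinSums Φ Δ ⊆ latticeClosure Φ Δ := by
  rintro _ (hγ | ⟨hγ, α, hα, β, hβ, rfl⟩)
  · exact ⟨hΔ hγ, AddSubgroup.subset_closure hγ⟩
  · exact ⟨hγ, add_mem (AddSubgroup.subset_closure hα) (AddSubgroup.subset_closure hβ)⟩

/-- A root system in `V` without the finiteness and spanning conditions. The remaining axioms pass
to subroot systems, so that facts about root systems can be applied to these as well. -/
structure IsIntegralRootSet (Φ : Set V) : Prop where
  zero_notMem : (0 : V) ∉ Φ
  reflRoot_mem : ∀ α ∈ Φ, ∀ β ∈ Φ, reflRoot α β ∈ Φ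
  exists_pairing_eq : ∀ α ∈ Φ, ∀ β ∈ Φ, ∃ m : ℤ, pairing β α = m

variable {Φ Φs Φl Δ C : Set V}

lemma IsRootSystem.isIntegralRootSet (hΦ : IsRootSystem Φ) : IsIntegralRootSet Φ :=
  ⟨hΦ.2.1, hΦ.2.2.2.1, hΦ.2.2.2.2⟩

namespace IsIntegralRootSet

lemma of_isSubRS (hΦ : IsIntegralRootSet Φ) (hΔ : IsSubRS Φ Δ) : IsIntegralRootSet Δ where
  zero_notMem h := hΦ.zero_notMem (hΔ.2.1 h)
  reflRoot_mem := hΔ.2.2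
  exists_pairing_eq α hα β hβ := hΦ.exists_pairing_eq α (hΔ.2.1 hα) β (hΔ.2.1 hβ)

lemma ne_zero (hΦ : IsIntegralRootSet Φ) {α : V} (hα : α ∈ Φ) : α ≠ 0 :=
  ne_of_mem_of_not_mem hα hΦ.zero_notMem

lemma neg_mem (hΦ : IsIntegralRootSet Φ) {α : V} (hα : α ∈ Φ) : -α ∈ Φ :=
  reflRoot_self (hΦ.ne_zero hα) ▸ hΦ.reflRoot_mem α hα α hα

lemma neg_eq (hΦ : IsIntegralRootSet Φ) : -Φ = Φ :=
  Set.ext fun α ↦ ⟨fun h ↦ neg_neg α ▸ hΦ.neg_mem h, hΦ.neg_mem⟩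

theorem add_eq_zero_or_add_mem_of_inner_neg (hΦ : IsIntegralRootSet Φ) {α β : V} (hα : α ∈ Φ)
    (hβ : β ∈ Φ) (h : ⟪α, β⟫ < 0) : α + β = 0 ∨ α + β ∈ Φ := by
  obtain ⟨m, hm⟩ := hΦ.exists_pairing_eq β hβ α hα
  obtain ⟨n, hn⟩ := hΦ.exists_pairing_eq α hα β hβ
  have hm_neg : m < 0 := by
    exact_mod_cast hm ▸ pairing_neg_of_inner_neg h
  have hn_neg : n < 0 := by
    exact_mod_cast hn ▸ pairing_neg_of_inner_neg (real_inner_comm α β ▸ h)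
  obtain rfl | rfl | ⟨hm_le, hn_le⟩ : m = -1 ∨ n = -1 ∨ (m ≤ -2 ∧ n ≤ -2) := by omega
  · right
    rw [← reflRoot_of_pairing_eq_neg_one (by simpa using hm)]
    exact hΦ.reflRoot_mem β hβ α hα
  · right
    rw [add_comm, ← reflRoot_of_pairing_eq_neg_one (by simpa using hn)]
    exact hΦ.reflRoot_mem α hα β hβ
  · left
    exact add_eq_zero_of_pairing_le_neg_two (by rw [hm]; exact_mod_cast hm_le)
      (by rw [hn]; exact_mod_cast hn_le)

theorem sub_eq_zero_or_sub_mem_of_inner_pos (hΦ : IsIntegralRootSet Φ) {α β : V} (hα : α ∈ Φ)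
    (hβ : β ∈ Φ) (h : 0 < ⟪α, β⟫) : α - β = 0 ∨ α - β ∈ Φ := by
  rw [sub_eq_add_neg]
  exact hΦ.add_eq_zero_or_add_mem_of_inner_neg hα (hΦ.neg_mem hβ) (by simpa using h)

theorem multiset_sum_mem_of_add_mem (hΦ : IsIntegralRootSet Φ) (hΔ : Δ ⊆ Φ) (hΔC : Δ ⊆ C)
    (hadd : ∀ x ∈ Δ, ∀ y ∈ C, x + y ∈ Φ → x + y ∈ C) (s : Multiset V) (hs : ∀ x ∈ s, x ∈ Δ)
    (hsum : s.sum ∈ Φ) : s.sum ∈ C := by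
  induction s using Multiset.strongInductionOn with
  | ih s ih =>
    -- A summand that makes an acute angle with the total can be split off without leaving `Φ`.
    obtain ⟨x, hxs, hx⟩ := exists_mem_inner_pos_of_inner_sum_pos
      (real_inner_self_pos.2 (hΦ.ne_zero hsum))
    have hxΔ : x ∈ Δ := hs x hxs
    have hsub := hΦ.sub_eq_zero_or_sub_mem_of_inner_pos hsum (hΔ hxΔ) hx
    obtain ⟨t, rfl⟩ := Multiset.exists_cons_of_mem hxs
    rw [Multiset.sum_cons] at hsum hsub ⊢
    rw [add_sub_cancel_left] at hsub
    rcases hsub with ht | ht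
    · rw [ht, add_zero]
      exact hΔC hxΔ
    · have htΔ : ∀ y ∈ t, y ∈ Δ := fun y hy ↦ hs y (Multiset.mem_cons_of_mem hy)
      have htC : t.sum ∈ C := ih t (Multiset.lt_cons_self t x) htΔ ht
      exact hadd x hxΔ t.sum htC hsum

theorem latticeClosure_subset_of_add_mem (hΦ : IsIntegralRootSet Φ) (hΔ : IsSubRS Φ Δ)
    (hΔC : Δ ⊆ C) (hadd : ∀ x ∈ Δ, ∀ y ∈ C, x + y ∈ Φ → x + y ∈ C) :
    latticeClosure Φ Δ ⊆ C := by
  rintro γ ⟨hγΦ, hγ⟩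
  rw [SetLike.mem_coe, ← AddSubgroup.mem_toAddSubmonoid, AddSubgroup.closure_toAddSubmonoid,
    (hΦ.of_isSubRS hΔ).neg_eq, Set.union_self] at hγ
  obtain ⟨s, hs, rfl⟩ := AddSubmonoid.exists_multiset_of_mem_closure hγ
  exact hΦ.multiset_sum_mem_of_add_mem hΔ.2.1 hΔC hadd s hs hγΦ

theorem isClosedSubRS_latticeClosure (hΦ : IsIntegralRootSet Φ) (hne : Δ.Nonempty)
    (hΔ : Δ ⊆ Φ) : IsClosedSubRS Φ (latticeClosure Φ Δ) := by
  refine ⟨⟨hne.mono (Set.subset_inter hΔ AddSubgroup.subset_closure), Set.inter_subset_left, ?_⟩,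
    fun α hα β hβ h ↦ ⟨h, add_mem hα.2 hβ.2⟩⟩
  rintro α ⟨hαΦ, hα⟩ β ⟨hβΦ, hβ⟩
  refine ⟨hΦ.reflRoot_mem α hαΦ β hβΦ, ?_⟩
  obtain ⟨m, hm⟩ := hΦ.exists_pairing_eq α hαΦ β hβΦ
  rw [reflRoot, hm, Int.cast_smul_eq_zsmul]
  exact sub_mem hβ (zsmul_mem hα m)

end IsIntegralRootSet

lemma IsClosedSubRS.adjoinSums_subset (hC : IsClosedSubRS Φ C) (h : Δ ⊆ C) :
    adjoinSums Φ Δ ⊆ C := by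
  rintro _ (hγ | ⟨hγ, α, hα, β, hβ, rfl⟩)
  · exact h hγ
  · exact hC.2 α (h hα) β (h hβ) hγ

namespace IsIntegralRootSet

lemma add_add_mem_adjoinSums_of_inner_neg (hΔ : IsIntegralRootSet Δ) {x α β : V} (hx : x ∈ Δ)
    (hα : α ∈ Δ) (hβ : β ∈ Δ) (hneg : ⟪x, α⟫ < 0) (hΦ : x + (α + β) ∈ Φ) :
    x + (α + β) ∈ adjoinSums Φ Δ := by
  rw [← add_assoc] at hΦ ⊢
  rcases hΔ.add_eq_zero_or_add_mem_of_inner_neg hx hα hneg with h | h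
  · rw [h, zero_add]
    exact subset_adjoinSums hβ
  · exact add_mem_adjoinSums h hβ hΦ

theorem add_mem_adjoinSums_of_isMaxOn (hΔ : IsIntegralRootSet Δ)
    (hmax : ∀ γ ∈ (Φ ∩ (Δ + Δ)) \ Δ, IsMaxOn (fun v ↦ ⟪v, v⟫) Φ γ) {x y : V} (hx : x ∈ Δ)
    (hy : y ∈ adjoinSums Φ Δ) (hxy : x + y ∈ Φ) : x + y ∈ adjoinSums Φ Δ := by
  by_cases hyΔ : y ∈ Δ
  · exact add_mem_adjoinSums hx hyΔ hxy
  have hy' : y ∈ Φ ∩ (Δ + Δ) := hy.resolve_left hyΔ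
  have hinner : ⟪x, y⟫ < 0 :=
    inner_neg_of_inner_add_self_le (hΔ.ne_zero hx) (hmax y ⟨hy', hyΔ⟩ hxy)
  obtain ⟨-, α, hα, β, hβ, rfl⟩ := hy'
  rw [inner_add_right] at hinner
  rcases lt_or_ge ⟪x, α⟫ 0 with hxα | hxα
  · exact hΔ.add_add_mem_adjoinSums_of_inner_neg hx hα hβ hxα hxy
  · have hxβ : ⟪x, β⟫ < 0 := by linarith
    simp only [add_comm α β] at hxy ⊢
    exact hΔ.add_add_mem_adjoinSums_of_inner_neg hx hβ hα hxβ hxy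

theorem adjoinSums_eq_latticeClosure (hΦ : IsIntegralRootSet Φ) (hΔ : IsSubRS Φ Δ)
    (hmax : ∀ γ ∈ (Φ ∩ (Δ + Δ)) \ Δ, IsMaxOn (fun v ↦ ⟪v, v⟫) Φ γ) :
    adjoinSums Φ Δ = latticeClosure Φ Δ :=
  (adjoinSums_subset_latticeClosure hΔ.2.1).antisymm <|
    hΦ.latticeClosure_subset_of_add_mem hΔ subset_adjoinSums fun _ hx _ hy hxy ↦
      (hΦ.of_isSubRS hΔ).add_mem_adjoinSums_of_isMaxOn hmax hx hy hxy

end IsIntegralRootSet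

namespace IsSemiClosedSubRS

lemma mem_of_add_notMem (hΔ : IsSemiClosedSubRS Φ Φs Φl ∅ Δ) {α β : V} (hα : α ∈ Δ) (hβ : β ∈ Δ)
    (h : α + β ∈ Φ) (hnot : α + β ∉ Δ) : α ∈ Φs ∧ β ∈ Φs ∧ α + β ∈ Φl := by
  simpa using hΔ.2.2 α hα β hβ h hnot

lemma union_sums_eq_adjoinSums (hΔ : IsSemiClosedSubRS Φ Φs Φl ∅ Δ) (hΦl : Φl ⊆ Φ) :
    Δ ∪ {γ ∈ Φl | ∃ α ∈ Δ ∩ Φs, ∃ β ∈ Δ ∩ Φs, γ = α + β} = adjoinSums Φ Δ := by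
  apply Set.Subset.antisymm
  · rintro _ (hγ | ⟨hγ, α, ⟨hα, -⟩, β, ⟨hβ, -⟩, rfl⟩)
    · exact subset_adjoinSums hγ
    · exact add_mem_adjoinSums hα hβ (hΦl hγ)
  · rintro _ (hγ | ⟨hγ, α, hα, β, hβ, rfl⟩)
    · exact Or.inl hγ
    · refine or_iff_not_imp_left.2 fun hnot ↦ ?_
      obtain ⟨hαs, hβs, hl⟩ := hΔ.mem_of_add_notMem hα hβ hγ hnot
      exact ⟨hl, α, ⟨hα, hαs⟩, β, ⟨hβ, hβs⟩, rfl⟩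

lemma sums_sdiff_subset (hΔ : IsSemiClosedSubRS Φ Φs Φl ∅ Δ) : (Φ ∩ (Δ + Δ)) \ Δ ⊆ Φl := by
  rintro _ ⟨⟨hγ, α, hα, β, hβ, rfl⟩, hnot⟩
  exact (hΔ.mem_of_add_notMem hα hβ hγ hnot).2.2

lemma ssubset_adjoinSums (hΔ : IsSemiClosedSubRS Φ Φs Φl ∅ Δ) : Δ ⊂ adjoinSums Φ Δ :=
  ⟨subset_adjoinSums, fun h ↦ hΔ.2.1 fun _ hα _ hβ hαβ ↦ h (add_mem_adjoinSums hα hβ hαβ)⟩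

end IsSemiClosedSubRS

lemma IsMaxSemiClosedSubRS.sdiff_subset (hΔ : IsMaxSemiClosedSubRS Φ Φs Φl ∅ Δ)
    (hclosed : IsClosedSubRS Φ (adjoinSums Φ Δ)) : Φ \ Φl ⊆ Δ := by
  have hall : adjoinSums Φ Δ = Φ :=
    not_not.1 fun h ↦ hΔ.2 _ hclosed h hΔ.1.ssubset_adjoinSums
  rintro γ ⟨hγ, hγl⟩
  by_contra hnot
  rw [← hall] at hγ
  exact hγl (hΔ.1.sums_sdiff_subset ⟨hγ.resolve_left hnot, hnot⟩)

theorem statement7_general (hΦ : IsIntegralRootSet Φ) (b : ℝ) (hb : ∀ α ∈ Φ, ⟪α, α⟫ ≤ b)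
    (hΦs : Φs = {α ∈ Φ | ⟪α, α⟫ < b}) (hΦl : Φl = Φ \ Φs)
    (hΔ : IsMaxSemiClosedSubRS Φ Φs Φl ∅ Δ) :
    (IsClosedSubRS Φ (Δ ∪ {γ ∈ Φl | ∃ α ∈ Δ ∩ Φs, ∃ β ∈ Δ ∩ Φs, γ = α + β}) ∧
      ∀ C : Set V, IsClosedSubRS Φ C → Δ ⊆ C →
        Δ ∪ {γ ∈ Φl | ∃ α ∈ Δ ∩ Φs, ∃ β ∈ Δ ∩ Φs, γ = α + β} ⊆ C) ∧
    Φs ⊆ Δ := by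
  have hlong : ∀ γ ∈ Φl, IsMaxOn (fun v ↦ ⟪v, v⟫) Φ γ := by
    subst hΦl hΦs
    exact fun γ hγ α hα ↦ (hb α hα).trans (not_lt.1 fun h ↦ hγ.2 ⟨hγ.1, h⟩)
  have hshort : Φ \ Φl = Φs := by
    rw [hΦl, Set.sdiff_sdiff_right_self, hΦs, Set.inter_eq_right]
    exact Set.sep_subset _ _
  have hsub : IsSubRS Φ Δ := hΔ.1.1
  have hclosed : IsClosedSubRS Φ (adjoinSums Φ Δ) := by
    rw [hΦ.adjoinSums_eq_latticeClosure hsub fun γ hγ ↦ hlong γ (hΔ.1.sums_sdiff_subset hγ)]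
    exact hΦ.isClosedSubRS_latticeClosure hsub.1 hsub.2.1
  rw [hΔ.1.union_sums_eq_adjoinSums (hΦl ▸ Set.sdiff_subset)]
  exact ⟨⟨hclosed, fun _ hC ↦ hC.adjoinSums_subset⟩, hshort ▸ hΔ.sdiff_subset hclosed⟩

/-- Lemma 3.9: the closed subroot system generated by a maximal semi-closed
subroot system, and `Φ̊_s ⊆ Φ̊'`. -/
theorem statement7 {V : Type*} [NormedAddCommGroup V] [InnerProductSpace ℝ V]
    [FiniteDimensional ℝ V]
    (Φ : Set V) (hΦ : IsRootSystem Φ) (hred : IsReduced Φ) (hirr : IsIrreducible Φ)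
    (a b : ℝ) (hab : a < b)
    (hlen : ∀ α ∈ Φ, ⟪α, α⟫ = a ∨ ⟪α, α⟫ = b)
    (ha : ∃ α ∈ Φ, ⟪α, α⟫ = a) (hb : ∃ β ∈ Φ, ⟪β, β⟫ = b)
    (Φs Φl : Set V) (hΦs : Φs = {α ∈ Φ | ⟪α, α⟫ = a}) (hΦl : Φl = Φ \ Φs)
    (Δ : Set V) (hΔ : IsMaxSemiClosedSubRS Φ Φs Φl ∅ Δ) :
    (IsClosedSubRS Φ (Δ ∪ {γ ∈ Φl | ∃ α ∈ Δ ∩ Φs, ∃ β ∈ Δ ∩ Φs, γ = α + β}) ∧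
      ∀ C : Set V, IsClosedSubRS Φ C → Δ ⊆ C →
        Δ ∪ {γ ∈ Φl | ∃ α ∈ Δ ∩ Φs, ∃ β ∈ Δ ∩ Φs, γ = α + β} ⊆ C) ∧
    Φs ⊆ Δ := by
  have hle : ∀ α ∈ Φ, ⟪α, α⟫ ≤ b := fun α hα ↦ (hlen α hα).elim (·.trans_le hab.le) le_of_eq
  have hs : Φs = {α ∈ Φ | ⟪α, α⟫ < b} := by grind
  exact statement7_general hΦ.isIntegralRootSet b hle hs hΦl hΔ

end BdS
end
end
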